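/- Let K be a field of characteristic p > 0 and λ ∈ K, and let f_λ = x^3 + y^3 + z^3 + λxyz ∈ K[x, y, z]. Then the coefficient of (xyz)^{p−1} in f_λ^{p−1} equals φ(λ) = Σ_{s=0}^{⌊(p−1)/3⌋} (−1)^s · ((3s)!/(s!)^3) · λ^{p−1−3s} (the multinomial coefficients read in K). Moreover, if f_λ has an isolated singularity, then fpt(f_λ) = 1 when φ(λ) ≠ 0 and fpt(f_λ) = 1 − 1/p when φ(λ) = 0. -/

import Mathlib

/-!
Write `f = f_λ` and `q = p^e`. The coefficient formula comes from expanding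
`((x³ + y³ + z³) + λxyz)^{p-1}` with the binomial and multinomial theorems and using
`binom(p-1, 3s) = (-1)^s` in `K`.

The only monomial of degree `3(q-1)` outside `m^{[q]}` is `(xyz)^{q-1}`, so
`f^{p-1} ≡ φ·(xyz)^{p-1}` modulo `m^{[p]}`, and always `f^q ∈ m^{[q]}`.

If `φ ≠ 0`, raising to `p`-th powers shows by induction that `f^{q-1}` is a nonzero multiple of
`(xyz)^{q-1}` modulo `m^{[q]}` (`hesse_pow_sub_mem`), so `μ_f(q) = q` and the threshold is `1`.

If `φ = 0`, the claim is `μ_f(p^{e+1}) = p^{e+1} - p^e`. The isolated singularity forces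
`3(27 + λ³) ≠ 0` (`ne_zero_of_isolated`), and then the Jacobian ideal contains `m⁴`
(`monomial_mem_of_jacobian_mem`). Let `p ∣ q` and `μ = μ_f(q)`. If `p ∤ μ`, differentiating
`f^μ ∈ m^{[q]}` gives `f^{μ-1}·m⁴ ⊆ m^{[q]}` while `f^{μ-1} ∉ m^{[q]}`; comparing degrees yields
`μ ≥ q - 1` (`dvd_muF_or_le`). Together with `p(μ_f(q) - 1) < μ_f(pq) ≤ p·μ_f(q)` this determines
`μ_f(p^{e+1})` inductively, starting from `μ_f(p) = p - 1`.
-/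

open MvPolynomial Filter Topology

/-- The Frobenius power `m^{[q]}` of the maximal ideal `m = (x_0, …, x_n)` of
`R = K[x_0, …, x_n]`, i.e. the ideal generated by `x_0^q, …, x_n^q`. -/
noncomputable def frobeniusPower (K : Type*) [Field K] (n q : ℕ) :
    Ideal (MvPolynomial (Fin (n + 1)) K) :=
  Ideal.span (Set.range fun i : Fin (n + 1) => (X i : MvPolynomial (Fin (n + 1)) K) ^ q)

/-- `μ_f(q) = min {k ∈ ℕ : f^k ∈ m^{[q]}}`. -/
noncomputable def muF {K : Type*} [Field K] {n : ℕ}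
    (f : MvPolynomial (Fin (n + 1)) K) (q : ℕ) : ℕ :=
  sInf {k : ℕ | f ^ k ∈ frobeniusPower K n q}

/-- `f` has an isolated singularity: its partial derivatives `∂f/∂x_0, …, ∂f/∂x_n`
form a regular sequence in `R`. -/
def HasIsolatedSingularity {K : Type*} [Field K] {n : ℕ}
    (f : MvPolynomial (Fin (n + 1)) K) : Prop :=
  RingTheory.Sequence.IsRegular (MvPolynomial (Fin (n + 1)) K)
    ((List.finRange (n + 1)).map fun i => MvPolynomial.pderiv i f)

/-- `fpt(f) = c`: the sequence `μ_f(p^e)/p^e` converges to `c`. -/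
def HasFpt {K : Type*} [Field K] {n : ℕ} (p : ℕ)
    (f : MvPolynomial (Fin (n + 1)) K) (c : ℝ) : Prop :=
  Tendsto (fun e : ℕ => (muF f (p ^ e) : ℝ) / ((p : ℝ) ^ e)) atTop (𝓝 c)

/-! ### The coefficient of `(xyz)^{p-1}` -/

section CoefficientComputation

/-- In characteristic `p`, `binom(p-1, j) = (-1)^j`, by Pascal's rule and `p ∣ binom(p, j+1)`. -/
lemma choose_pred_prime {K : Type*} [Field K] {p : ℕ} [hp : Fact p.Prime] [CharP K p]
    (j : ℕ) (hj : j ≤ p - 1) : ((p - 1).choose j : K) = (-1) ^ j := by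
  have hp2 := hp.out.two_le
  induction j with
  | zero => simp
  | succ j ih =>
    have h0 : ((p.choose (j + 1) : ℕ) : K) = 0 :=
      (CharP.cast_eq_zero_iff K p _).2 (hp.out.dvd_choose_self (by omega) (by omega))
    have h1 : p.choose (j + 1) = (p - 1).choose j + (p - 1).choose (j + 1) := by
      conv_lhs => rw [show p = (p - 1) + 1 by omega]
      exact Nat.choose_succ_succ _ _
    rw [h1, Nat.cast_add, ih (by omega)] at h0
    rw [pow_succ]
    linear_combination h0

lemma univ_prod_X_pow {K : Type*} [Field K] (k : Fin 3 → ℕ) :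
    ∏ i, (X i : MvPolynomial (Fin 3) K) ^ k i = monomial (Finsupp.equivFunOnFinite.symm k) 1 := by
  rw [monomial_eq, Finsupp.prod_fintype _ _ (by simp)]
  simp

lemma xyz_pow {K : Type*} [Field K] (m : ℕ) :
    (X 0 * X 1 * X 2 : MvPolynomial (Fin 3) K) ^ m
      = monomial (Finsupp.equivFunOnFinite.symm fun _ : Fin 3 => m) 1 := by
  rw [← univ_prod_X_pow, Fin.prod_univ_three, mul_pow, mul_pow]

/-- By the multinomial theorem, `(xyz)^m` occurs in `(x³ + y³ + z³)^m` only for `m = 3s`, from the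
term `(x³)^s (y³)^s (z³)^s`. -/
lemma coeff_sum_cubes_pow {K : Type*} [Field K] (m : ℕ) :
    coeff (Finsupp.equivFunOnFinite.symm fun _ : Fin 3 => m)
      ((X 0 ^ 3 + X 1 ^ 3 + X 2 ^ 3 : MvPolynomial (Fin 3) K) ^ m)
      = if 3 ∣ m then ((m.factorial / (m / 3).factorial ^ 3 : ℕ) : K) else 0 := by
  have h := Finset.sum_pow_eq_sum_piAntidiag (Finset.univ : Finset (Fin 3))
    (fun i => (X i : MvPolynomial (Fin 3) K) ^ 3) m
  rw [Fin.sum_univ_three] at h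
  have hterm : ∀ k : Fin 3 → ℕ,
      coeff (Finsupp.equivFunOnFinite.symm fun _ : Fin 3 => m)
        ((Nat.multinomial Finset.univ k : MvPolynomial (Fin 3) K) *
          ∏ i, ((X i : MvPolynomial (Fin 3) K) ^ 3) ^ k i)
      = if (∀ i, 3 * k i = m) then (Nat.multinomial Finset.univ k : K) else 0 := by
    intro k
    simp_rw [← pow_mul]
    rw [univ_prod_X_pow, ← map_natCast C, coeff_C_mul, coeff_monomial]
    have : (Finsupp.equivFunOnFinite.symm (fun i => 3 * k i)
        = Finsupp.equivFunOnFinite.symm (fun _ : Fin 3 => m)) ↔ ∀ i, 3 * k i = m := by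
      rw [Equiv.apply_eq_iff_eq, funext_iff]
    simp only [this]
    split_ifs <;> simp
  rw [h, coeff_sum, Finset.sum_congr rfl fun k _ => hterm k]
  split_ifs with hm
  · obtain ⟨s, rfl⟩ := hm
    rw [Finset.sum_eq_single (fun _ => s)]
    · simp [Nat.multinomial, Finset.sum_const]
    · intro k _ hk
      rw [if_neg]
      intro h
      apply hk
      funext i
      have := h i
      omega
    · intro hs
      exfalso
      apply hs
      simp [Finset.mem_piAntidiag]
  · refine Finset.sum_eq_zero fun k _ => if_neg fun h => hm ⟨k 0, (h 0).symm⟩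

lemma coeff_hesse {K : Type*} [Field K] {p : ℕ} [hp : Fact p.Prime] [CharP K p] (lam : K) :
    coeff (Finsupp.equivFunOnFinite.symm fun _ : Fin 3 => p - 1)
      ((X 0 ^ 3 + X 1 ^ 3 + X 2 ^ 3 + C lam * (X 0 * X 1 * X 2) : MvPolynomial (Fin 3) K) ^ (p - 1))
    = ∑ s ∈ Finset.range ((p - 1) / 3 + 1),
      (-1 : K) ^ s * (((3 * s).factorial / s.factorial ^ 3 : ℕ) : K) * lam ^ (p - 1 - 3 * s) := by
  rw [add_pow, coeff_sum]
  have hterm : ∀ m ∈ Finset.range (p - 1 + 1),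
      coeff (Finsupp.equivFunOnFinite.symm fun _ : Fin 3 => p - 1)
        ((X 0 ^ 3 + X 1 ^ 3 + X 2 ^ 3 : MvPolynomial (Fin 3) K) ^ m *
          (C lam * (X 0 * X 1 * X 2)) ^ (p - 1 - m) * ((p - 1).choose m : MvPolynomial (Fin 3) K))
      = if 3 ∣ m then
          (-1 : K) ^ m * ((m.factorial / (m / 3).factorial ^ 3 : ℕ) : K) * lam ^ (p - 1 - m)
        else 0 := by
    intro m hm
    have hm' : m ≤ p - 1 := by simpa [Nat.lt_succ_iff] using hm
    have e1 : (Finsupp.equivFunOnFinite.symm fun _ : Fin 3 => p - 1)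
        = (Finsupp.equivFunOnFinite.symm fun _ : Fin 3 => p - 1 - m)
          + (Finsupp.equivFunOnFinite.symm fun _ : Fin 3 => m) := by
      ext i; simp; omega
    have e2 : ((X 0 ^ 3 + X 1 ^ 3 + X 2 ^ 3 : MvPolynomial (Fin 3) K) ^ m *
          (C lam * (X 0 * X 1 * X 2)) ^ (p - 1 - m) * ((p - 1).choose m : MvPolynomial (Fin 3) K))
        = C (lam ^ (p - 1 - m) * ((p - 1).choose m : K)) *
          ((X 0 * X 1 * X 2) ^ (p - 1 - m) * (X 0 ^ 3 + X 1 ^ 3 + X 2 ^ 3) ^ m) := by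
      rw [mul_pow (C lam), ← C_pow, C_mul, ← map_natCast C]
      ring
    rw [e2, coeff_C_mul, xyz_pow, e1, coeff_monomial_mul, coeff_sum_cubes_pow,
      choose_pred_prime m hm']
    split_ifs
    · ring
    · ring
  rw [Finset.sum_congr rfl hterm, ← Finset.sum_filter]
  symm
  refine Finset.sum_bij' (fun s _ => 3 * s) (fun m _ => m / 3) ?_ ?_ ?_ ?_ ?_
  · intro s hs
    simp only [Finset.mem_range, Finset.mem_filter] at hs ⊢
    exact ⟨by omega, Dvd.intro _ rfl⟩
  · intro m hm
    simp only [Finset.mem_range, Finset.mem_filter] at hm ⊢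
    omega
  · intro s _; simp
  · intro m hm
    simp only [Finset.mem_filter] at hm
    exact Nat.mul_div_cancel' hm.2
  · intro s _
    rw [pow_mul, Nat.mul_div_cancel_left s (by norm_num)]
    norm_num

end CoefficientComputation

/-! ### Membership in `m^{[q]}` -/

section FrobeniusPowers

/-- Since `m^{[q]}` is a monomial ideal, membership is tested on the support. -/
lemma mem_frobeniusPower_iff {K : Type*} [Field K] {n q : ℕ}
    {g : MvPolynomial (Fin (n + 1)) K} :
    g ∈ frobeniusPower K n q ↔ ∀ d, coeff d g ≠ 0 → ∃ i, q ≤ d i := by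
  have h : frobeniusPower K n q = Ideal.span ((fun s => monomial s (1 : K)) ''
      (Set.range fun i : Fin (n + 1) => Finsupp.single i q)) := by
    rw [frobeniusPower, ← Set.range_comp]
    congr 2
    funext i
    simp [X_pow_eq_monomial]
  rw [h, mem_ideal_span_monomial_image]
  simp [Finsupp.single_le_iff]

lemma X_pow_mem_frobeniusPower {K : Type*} [Field K] {n : ℕ} (q : ℕ) (i : Fin (n + 1)) :
    (X i : MvPolynomial (Fin (n + 1)) K) ^ q ∈ frobeniusPower K n q :=
  Ideal.subset_span ⟨i, rfl⟩

/-- Flatness of Frobenius, seen on coefficients: the coefficient of `x^{pd}` in `g^p` is the `p`-th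
power of that of `x^d` in `g`. -/
lemma pow_char_mem_iff {K : Type*} [Field K] {n p : ℕ} [hp : Fact p.Prime] [CharP K p] {q : ℕ}
    {g : MvPolynomial (Fin (n + 1)) K} :
    g ^ p ∈ frobeniusPower K n (p * q) ↔ g ∈ frobeniusPower K n q := by
  have hp0 := hp.out.pos
  constructor
  · rw [mem_frobeniusPower_iff, mem_frobeniusPower_iff]
    intro h d hd
    have hc : coeff (p • d) (g ^ p) = coeff d g ^ p := by
      rw [← map_frobenius_expand p, coeff_map, coeff_expand_smul p hp0.ne', frobenius_def]
    obtain ⟨i, hi⟩ := h (p • d) (by rw [hc]; exact pow_ne_zero _ hd)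
    exact ⟨i, Nat.le_of_mul_le_mul_left (by simpa using hi) hp0⟩
  · intro h
    have hle : frobeniusPower K n q ≤
        (frobeniusPower K n (p * q)).comap (frobenius (MvPolynomial (Fin (n + 1)) K) p) := by
      refine Ideal.span_le.2 ?_
      rintro _ ⟨i, rfl⟩
      simp only [SetLike.mem_coe, Ideal.mem_comap, frobenius_def, ← pow_mul, mul_comm q p]
      exact X_pow_mem_frobeniusPower _ i
    exact hle h

/-- Partial derivatives preserve `m^{[q]}` for `p ∣ q`, because they kill each `x_i^q`. -/
lemma pderiv_mem_frobeniusPower {K : Type*} [Field K] {n p : ℕ} [CharP K p] {q : ℕ} (hq : p ∣ q)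
    {g : MvPolynomial (Fin (n + 1)) K} (hg : g ∈ frobeniusPower K n q) (j : Fin (n + 1)) :
    pderiv j g ∈ frobeniusPower K n q := by
  refine Submodule.span_induction ?_ ?_ ?_ ?_ hg
  · rintro _ ⟨i, rfl⟩
    have : ((q : ℕ) : MvPolynomial (Fin (n + 1)) K) = 0 :=
      (CharP.cast_eq_zero_iff _ p q).2 hq
    simp [Derivation.leibniz_pow, this]
  · simp
  · intro x y _ _ hx hy
    rw [map_add]
    exact Ideal.add_mem _ hx hy
  · intro a x hx hx'
    rw [smul_eq_mul, Derivation.leibniz, smul_eq_mul, smul_eq_mul]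
    exact Ideal.add_mem _ (Ideal.mul_mem_left _ _ hx') (Ideal.mul_mem_right _ _ hx)

lemma degree_fin_three (d : Fin 3 →₀ ℕ) : Finsupp.degree d = d 0 + d 1 + d 2 := by
  rw [Finsupp.degree_eq_sum, Fin.sum_univ_three]

/-- The only monomial of degree `3(q-1)` outside `m^{[q]}` is `(xyz)^{q-1}`. -/
lemma sub_mem_frobeniusPower {K : Type*} [Field K] {q : ℕ} (hq : 1 ≤ q)
    {g : MvPolynomial (Fin 3) K} (hg : g.IsHomogeneous (3 * (q - 1))) :
    g - C (coeff (Finsupp.equivFunOnFinite.symm fun _ : Fin 3 => q - 1) g) *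
      (X 0 * X 1 * X 2) ^ (q - 1) ∈ frobeniusPower K 2 q := by
  rw [mem_frobeniusPower_iff]
  intro d hd
  by_contra! hlt
  apply hd
  rw [coeff_sub, coeff_C_mul, xyz_pow, coeff_monomial]
  split_ifs with h
  · rw [h]; ring
  · rw [hg.coeff_eq_zero, mul_zero, sub_zero]
    intro hdeg
    apply h
    rw [degree_fin_three] at hdeg
    have h0 := hlt 0
    have h1 := hlt 1
    have h2 := hlt 2
    ext i
    fin_cases i <;> simp <;> omega

lemma xyz_pow_notMem {K : Type*} [Field K] {q : ℕ} (hq : 1 ≤ q) :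
    (X 0 * X 1 * X 2 : MvPolynomial (Fin 3) K) ^ (q - 1) ∉ frobeniusPower K 2 q := by
  rw [mem_frobeniusPower_iff, xyz_pow]
  intro h
  obtain ⟨i, hi⟩ := h (Finsupp.equivFunOnFinite.symm fun _ : Fin 3 => q - 1) (by simp)
  simp at hi
  omega

/-- Multiplying by `(xyz)^{(q-1)p}` sends `m^{[p]}` into `m^{[pq]}`. -/
lemma xyz_pow_mul_mem {K : Type*} [Field K] {p q : ℕ} (hq : 1 ≤ q) {g : MvPolynomial (Fin 3) K}
    (hg : g ∈ frobeniusPower K 2 p) :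
    (X 0 * X 1 * X 2) ^ ((q - 1) * p) * g ∈ frobeniusPower K 2 (p * q) := by
  refine Submodule.span_induction ?_ (by simp) ?_ ?_ hg
  · rintro _ ⟨i, rfl⟩
    refine Ideal.mem_of_dvd _ ?_ (X_pow_mem_frobeniusPower (p * q) i)
    have hpq : p * q = (q - 1) * p + p := by
      obtain ⟨r, rfl⟩ := Nat.exists_eq_add_of_le hq
      simp; ring
    rw [hpq, pow_add]
    refine mul_dvd_mul_right (pow_dvd_pow_of_dvd ?_ _) _
    fin_cases i
    · exact ⟨X 1 * X 2, by simp; ring⟩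
    · exact ⟨X 0 * X 2, by simp; ring⟩
    · exact ⟨X 0 * X 1, by simp; ring⟩
  · intro x y _ _ hx hy
    rw [mul_add]
    exact Ideal.add_mem _ hx hy
  · intro a x _ hx
    rw [smul_eq_mul, mul_left_comm]
    exact Ideal.mul_mem_left _ _ hx

/-- The inclusion `(m^{[q]} : m⁴) ⊆ m^{[q]} + m^{3(q-1)-3}`, for forms: a form of degree at most
`3(q-1) - 4` outside `m^{[q]}` has a quartic monomial multiple outside `m^{[q]}`. -/
lemma exists_monomial_mul_notMem {K : Type*} [Field K] {q k : ℕ} (hk : k + 4 ≤ 3 * (q - 1))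
    {g : MvPolynomial (Fin 3) K} (hg : g.IsHomogeneous k) (hgm : g ∉ frobeniusPower K 2 q) :
    ∃ a b c : ℕ, a + b + c = 4 ∧ X 0 ^ a * X 1 ^ b * X 2 ^ c * g ∉ frobeniusPower K 2 q := by
  rw [mem_frobeniusPower_iff] at hgm
  push Not at hgm
  obtain ⟨d, hd, hlt⟩ := hgm
  have hdeg : d 0 + d 1 + d 2 = k := by
    by_contra h
    exact hd (hg.coeff_eq_zero (by rwa [degree_fin_three]))
  have h0 := hlt 0
  have h1 := hlt 1
  have h2 := hlt 2
  obtain ⟨a, b, c, hs, ha, hb, hc⟩ : ∃ a b c : ℕ, a + b + c = 4 ∧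
      a + d 0 < q ∧ b + d 1 < q ∧ c + d 2 < q :=
    ⟨min 4 (q - 1 - d 0), min (4 - min 4 (q - 1 - d 0)) (q - 1 - d 1),
      4 - min 4 (q - 1 - d 0) - min (4 - min 4 (q - 1 - d 0)) (q - 1 - d 1),
      by omega, by omega, by omega, by omega⟩
  refine ⟨a, b, c, hs, ?_⟩
  have hmon : (X 0 ^ a * X 1 ^ b * X 2 ^ c : MvPolynomial (Fin 3) K)
      = monomial (Finsupp.equivFunOnFinite.symm ![a, b, c]) 1 := by
    rw [← univ_prod_X_pow, Fin.prod_univ_three]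
    simp
  rw [hmon, mem_frobeniusPower_iff]
  intro h
  obtain ⟨i, hi⟩ := h (Finsupp.equivFunOnFinite.symm ![a, b, c] + d) (by
    rw [coeff_monomial_mul, one_mul]; exact hd)
  fin_cases i <;> simp at hi <;> omega

end FrobeniusPowers

/-! ### The Jacobian ideal of the Hesse cubic -/

section HesseCubic

/-- The Hesse cubic `x³ + y³ + z³ + λxyz`. -/
noncomputable def hesse {K : Type*} [Field K] (lam : K) : MvPolynomial (Fin 3) K :=
  X 0 ^ 3 + X 1 ^ 3 + X 2 ^ 3 + C lam * (X 0 * X 1 * X 2)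

lemma hesse_isHomogeneous {K : Type*} [Field K] (lam : K) : (hesse lam).IsHomogeneous 3 := by
  have hx : ∀ i : Fin 3, (X i ^ 3 : MvPolynomial (Fin 3) K).IsHomogeneous 3 := fun i => by
    simpa using (isHomogeneous_X K i).pow 3
  refine (((hx 0).add (hx 1)).add (hx 2)).add ?_
  simpa using (isHomogeneous_C (Fin 3) lam).mul
    (((isHomogeneous_X K (0 : Fin 3)).mul (isHomogeneous_X K 1)).mul (isHomogeneous_X K 2))

lemma hesse_pow_isHomogeneous {K : Type*} [Field K] (lam : K) (k : ℕ) :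
    (hesse lam ^ k).IsHomogeneous (3 * k) := (hesse_isHomogeneous lam).pow k

lemma pderiv_zero_hesse {K : Type*} [Field K] (lam : K) :
    pderiv 0 (hesse lam) = C 3 * X 0 ^ 2 + C lam * (X 1 * X 2) := by
  simp [hesse, Derivation.leibniz, Derivation.leibniz_pow, pderiv_X,
    show (C 3 : MvPolynomial (Fin 3) K) = 3 from map_ofNat C 3]
  exact Or.inl (by ring)

lemma pderiv_one_hesse {K : Type*} [Field K] (lam : K) :
    pderiv 1 (hesse lam) = C 3 * X 1 ^ 2 + C lam * (X 0 * X 2) := by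
  simp [hesse, Derivation.leibniz, Derivation.leibniz_pow, pderiv_X,
    show (C 3 : MvPolynomial (Fin 3) K) = 3 from map_ofNat C 3]
  exact Or.inl (by ring)

lemma pderiv_two_hesse {K : Type*} [Field K] (lam : K) :
    pderiv 2 (hesse lam) = C 3 * X 2 ^ 2 + C lam * (X 0 * X 1) := by
  simp [hesse, Derivation.leibniz, Derivation.leibniz_pow, pderiv_X,
    show (C 3 : MvPolynomial (Fin 3) K) = 3 from map_ofNat C 3]

/-- An ideal killed by the point `x_i ↦ ε`, `x_j ↦ 0` for `j ≠ i`, of the dual numbers does not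
contain `x_i`. -/
lemma notMem_of_aeval_eps {K : Type*} [Field K] (i : Fin 3) {I : Ideal (MvPolynomial (Fin 3) K)}
    (hI : ∀ g ∈ I,
      aeval (R := K) (fun j => if j = i then DualNumber.eps else (0 : DualNumber K)) g = 0) :
    (X i : MvPolynomial (Fin 3) K) ∉ I := by
  intro h
  have := hI _ h
  rw [aeval_X, if_pos rfl] at this
  have := congrArg TrivSqZeroExt.snd this
  simp at this

/-- The Jacobian ideal is generated by quadrics, so it contains no variable. -/
lemma X_notMem_span {K : Type*} [Field K] (lam : K) (i : Fin 3) :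
    (X i : MvPolynomial (Fin 3) K) ∉
      Ideal.span (Set.range fun j : Fin 3 => pderiv j (hesse lam)) := by
  refine notMem_of_aeval_eps i fun g hg => ?_
  refine Submodule.span_induction ?_ (map_zero _) ?_ ?_ hg
  · rintro _ ⟨j, rfl⟩
    fin_cases j <;> fin_cases i <;>
      simp [pderiv_zero_hesse, pderiv_one_hesse, pderiv_two_hesse, pow_two]
  · intro x y _ _ hx hy
    rw [map_add, hx, hy, add_zero]
  · intro a x _ hx
    rw [smul_eq_mul, map_mul, hx, mul_zero]

/-- The combination of the partial derivatives that exhibits `(27 + λ³)·x²y` in the Jacobian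
ideal. -/
lemma jacobian_identity {K : Type*} [Field K] (lam : K) (x y z : MvPolynomial (Fin 3) K) :
    C (27 + lam ^ 3) * (x ^ 2 * y) = C 9 * y * (C 3 * x ^ 2 + C lam * (y * z))
      - C 3 * C lam * z * (C 3 * y ^ 2 + C lam * (x * z))
      + C lam ^ 2 * x * (C 3 * z ^ 2 + C lam * (x * y)) := by
  simp only [map_add, map_pow, map_ofNat]
  ring

/-- If `3 = 0` then `y·∂_y f = x·∂_x f`, and if `27 + λ³ = 0` then `λ²x·∂_z f ∈ (∂_x f, ∂_y f)`.
Either relation would force a variable into the Jacobian ideal. -/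
lemma ne_zero_of_isolated {K : Type*} [Field K] (lam : K)
    (h : HasIsolatedSingularity (n := 2) (hesse lam)) : (3 : K) ≠ 0 ∧ 27 + lam ^ 3 ≠ 0 := by
  have hreg := h.toIsWeaklyRegular.regular_mod_prev
  have hlist : ((List.finRange (2 + 1)).map fun i => MvPolynomial.pderiv i (hesse lam))
      = [pderiv 0 (hesse lam), pderiv 1 (hesse lam), pderiv 2 (hesse lam)] := by
    simp [List.finRange_succ]
  rw [hlist] at hreg
  have hmem : ∀ j, pderiv j (hesse lam) ∈
      Ideal.span (Set.range fun j : Fin 3 => pderiv j (hesse lam)) :=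
    fun j => Ideal.subset_span ⟨j, rfl⟩
  have h3 : (3 : K) ≠ 0 := by
    intro h3
    have h1 := hreg 1 (by simp)
    apply X_notMem_span lam 1
    rw [isSMulRegular_iff_right_eq_zero_of_smul] at h1
    have := h1 (Submodule.Quotient.mk (X 1)) (by
      rw [← Submodule.Quotient.mk_smul, Submodule.Quotient.mk_eq_zero]
      simp only [List.take, List.getElem_cons_succ, List.getElem_cons_zero, Ideal.ofList_singleton,
        smul_eq_mul, Ideal.mul_top]
      refine Ideal.mem_span_singleton.2 ⟨X 0, ?_⟩
      rw [pderiv_zero_hesse, pderiv_one_hesse, h3]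
      simp
      ring)
    rw [Submodule.Quotient.mk_eq_zero] at this
    simp only [List.take, Ideal.ofList_singleton, smul_eq_mul, Ideal.mul_top] at this
    exact (Ideal.span_singleton_le_iff_mem _).2 (hmem 0) this
  refine ⟨h3, fun h27 => ?_⟩
  have hlam : lam ≠ 0 := by
    rintro rfl
    apply pow_ne_zero 3 h3
    linear_combination h27
  have h2 := hreg 2 (by simp)
  apply X_notMem_span lam 0
  rw [isSMulRegular_iff_right_eq_zero_of_smul] at h2
  have key : C lam ^ 2 * X 0 * pderiv 2 (hesse lam) =
      C 3 * C lam * X 2 * pderiv 1 (hesse lam) - C 9 * X 1 * pderiv 0 (hesse lam) := by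
    have := jacobian_identity lam (X 0) (X 1) (X 2)
    rw [h27, C_0, zero_mul] at this
    rw [pderiv_zero_hesse, pderiv_one_hesse, pderiv_two_hesse]
    linear_combination -this
  have := h2 (Submodule.Quotient.mk (C lam ^ 2 * X 0)) (by
    rw [← Submodule.Quotient.mk_smul, Submodule.Quotient.mk_eq_zero]
    simp only [List.take, List.getElem_cons_succ, List.getElem_cons_zero, Ideal.ofList_cons,
      Ideal.ofList_nil, smul_eq_mul, Ideal.mul_top]
    rw [mul_comm, key]
    refine Ideal.sub_mem _ (Ideal.mul_mem_left _ _ ?_) (Ideal.mul_mem_left _ _ ?_)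
    · exact Ideal.mem_sup_right (Ideal.mem_sup_left (Ideal.mem_span_singleton_self _))
    · exact Ideal.mem_sup_left (Ideal.mem_span_singleton_self _))
  rw [Submodule.Quotient.mk_eq_zero] at this
  simp only [List.take, Ideal.ofList_cons, Ideal.ofList_nil, smul_eq_mul, Ideal.mul_top] at this
  have hle : C lam ^ 2 * X 0 ∈ Ideal.span (Set.range fun j : Fin 3 => pderiv j (hesse lam)) := by
    revert this
    refine fun h => (show _ ≤ Ideal.span _ from sup_le ?_ (sup_le ?_ bot_le)) h
    · exact (Ideal.span_singleton_le_iff_mem _).2 (hmem 0)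
    · exact (Ideal.span_singleton_le_iff_mem _).2 (hmem 1)
  have := Ideal.mul_mem_left _ (C (lam ^ 2)⁻¹) hle
  rwa [← mul_assoc, ← C_pow, ← C_mul, inv_mul_cancel₀ (pow_ne_zero 2 hlam), C_1, one_mul] at this

lemma mem_of_C_mul_mem {K : Type*} [Field K] {I : Ideal (MvPolynomial (Fin 3) K)} {c : K} (hc : c ≠ 0)
    {g : MvPolynomial (Fin 3) K} (h : C c * g ∈ I) : g ∈ I := by
  have := Ideal.mul_mem_left _ (C c⁻¹) h
  rwa [← mul_assoc, ← C_mul, inv_mul_cancel₀ hc, C_1, one_mul] at this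

/-- If `I ∋ 3x² + λyz, 3y² + λxz, 3z² + λxy`, then `I` contains `x²y`, `x²z` and `x⁴`,
so any multiple of `x²` of degree `4`. -/
lemma monomial_mem_of_two_le {K : Type*} [Field K] {lam : K} (h3 : (3 : K) ≠ 0)
    (h27 : 27 + lam ^ 3 ≠ 0) {I : Ideal (MvPolynomial (Fin 3) K)} {x y z : MvPolynomial (Fin 3) K}
    (hx : C 3 * x ^ 2 + C lam * (y * z) ∈ I) (hy : C 3 * y ^ 2 + C lam * (x * z) ∈ I)
    (hz : C 3 * z ^ 2 + C lam * (x * y) ∈ I) {a b c : ℕ} (habc : a + b + c = 4) (ha : 2 ≤ a) :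
    x ^ a * y ^ b * z ^ c ∈ I := by
  have hxy : x ^ 2 * y ∈ I := by
    refine mem_of_C_mul_mem h27 ?_
    rw [jacobian_identity lam x y z]
    exact Ideal.add_mem _ (Ideal.sub_mem _ (Ideal.mul_mem_left _ _ hx) (Ideal.mul_mem_left _ _ hy))
      (Ideal.mul_mem_left _ _ hz)
  have hxz : x ^ 2 * z ∈ I := by
    refine mem_of_C_mul_mem h27 ?_
    rw [jacobian_identity lam x z y]
    rw [mul_comm y z] at hx
    exact Ideal.add_mem _ (Ideal.sub_mem _ (Ideal.mul_mem_left _ _ hx) (Ideal.mul_mem_left _ _ hz))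
      (Ideal.mul_mem_left _ _ hy)
  have hx4 : x ^ 4 ∈ I := by
    refine mem_of_C_mul_mem h3 ?_
    have : C 3 * x ^ 4 = x ^ 2 * (C 3 * x ^ 2 + C lam * (y * z)) - C lam * z * (x ^ 2 * y) := by
      ring
    rw [this]
    exact Ideal.sub_mem _ (Ideal.mul_mem_left _ _ hx) (Ideal.mul_mem_left _ _ hxy)
  obtain ⟨a, rfl⟩ := Nat.exists_eq_add_of_le ha
  rcases Nat.eq_zero_or_pos b with rfl | hb
  · rcases Nat.eq_zero_or_pos c with rfl | hc
    · obtain rfl : a = 2 := by omega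
      simpa using hx4
    · obtain ⟨c, rfl⟩ := Nat.exists_eq_add_of_le hc
      refine I.mem_of_dvd ⟨x ^ a * z ^ c, ?_⟩ hxz
      ring
  · obtain ⟨b, rfl⟩ := Nat.exists_eq_add_of_le hb
    refine I.mem_of_dvd ⟨x ^ a * y ^ b * z ^ c, ?_⟩ hxy
    ring

/-- For `3(27 + λ³) ≠ 0`, the Jacobian ideal contains `m⁴`. -/
lemma monomial_mem_of_jacobian_mem {K : Type*} [Field K] {lam : K} (h3 : (3 : K) ≠ 0)
    (h27 : 27 + lam ^ 3 ≠ 0) {I : Ideal (MvPolynomial (Fin 3) K)}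
    (hI : ∀ j, pderiv j (hesse lam) ∈ I) {a b c : ℕ} (habc : a + b + c = 4) :
    X 0 ^ a * X 1 ^ b * X 2 ^ c ∈ I := by
  have hx := hI 0
  have hy := hI 1
  have hz := hI 2
  rw [pderiv_zero_hesse] at hx
  rw [pderiv_one_hesse] at hy
  rw [pderiv_two_hesse] at hz
  rcases (by omega : 2 ≤ a ∨ 2 ≤ b ∨ 2 ≤ c) with h | h | h
  · exact monomial_mem_of_two_le h3 h27 hx hy hz habc h
  · rw [mul_comm (X 0 ^ a)]
    rw [mul_comm (X 0) (X 1)] at hz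
    exact monomial_mem_of_two_le h3 h27 hy hx hz (by omega) h
  · rw [mul_comm, ← mul_assoc]
    rw [mul_comm (X 1) (X 2)] at hx
    rw [mul_comm (X 0) (X 2)] at hy
    exact monomial_mem_of_two_le h3 h27 hz hx hy (by omega) h

end HesseCubic

/-! ### The values `μ_f(p^e)` -/

section Mu

variable {K : Type*} [Field K]

lemma muF_le {n : ℕ} {f : MvPolynomial (Fin (n + 1)) K} {q k : ℕ}
    (h : f ^ k ∈ frobeniusPower K n q) : muF f q ≤ k := Nat.sInf_le h

lemma pow_muF_mem {n : ℕ} {f : MvPolynomial (Fin (n + 1)) K} {q k : ℕ}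
    (h : f ^ k ∈ frobeniusPower K n q) : f ^ muF f q ∈ frobeniusPower K n q :=
  Nat.sInf_mem (s := {k : ℕ | f ^ k ∈ frobeniusPower K n q}) ⟨k, h⟩

lemma le_muF {n : ℕ} {f : MvPolynomial (Fin (n + 1)) K} {q k m : ℕ}
    (hm : f ^ m ∈ frobeniusPower K n q) (h : f ^ k ∉ frobeniusPower K n q) : k + 1 ≤ muF f q := by
  by_contra! hlt
  exact h (Ideal.pow_mem_of_pow_mem _ (pow_muF_mem hm) (by omega))

lemma pow_notMem_of_lt_muF {n : ℕ} {f : MvPolynomial (Fin (n + 1)) K} {q k : ℕ}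
    (h : k < muF f q) : f ^ k ∉ frobeniusPower K n q := fun hk => (muF_le hk).not_gt h

variable {p : ℕ} [hp : Fact p.Prime] [CharP K p]

lemma hesse_mem (lam : K) : hesse lam ∈ frobeniusPower K 2 1 := by
  have hX := fun i => X_pow_mem_frobeniusPower (K := K) (n := 2) 1 i
  simp only [pow_one] at hX
  refine Ideal.add_mem _ (Ideal.add_mem _ (Ideal.add_mem _ ?_ ?_) ?_) ?_
  · exact Ideal.pow_mem_of_mem _ (hX 0) 3 (by norm_num)
  · exact Ideal.pow_mem_of_mem _ (hX 1) 3 (by norm_num)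
  · exact Ideal.pow_mem_of_mem _ (hX 2) 3 (by norm_num)
  · exact Ideal.mul_mem_left _ _ (Ideal.mul_mem_left _ _ (hX 2))

lemma hesse_pow_mem (lam : K) (e : ℕ) : hesse lam ^ p ^ e ∈ frobeniusPower K 2 (p ^ e) := by
  induction e with
  | zero => simpa using hesse_mem lam
  | succ e ih =>
    rw [pow_succ, pow_mul, mul_comm]
    exact pow_char_mem_iff.2 ih

/-- If the coefficient `φ` of `(xyz)^{p-1}` in `f^{p-1}` is nonzero, then `f^{q-1}` is a nonzero
multiple of `(xyz)^{q-1}` modulo `m^{[q]}`, by induction along `f^{pq-1} = (f^{q-1})^p f^{p-1}`. -/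
lemma hesse_pow_sub_mem (lam : K)
    (h : coeff (Finsupp.equivFunOnFinite.symm fun _ : Fin 3 => p - 1) (hesse lam ^ (p - 1)) ≠ 0)
    (e : ℕ) : ∃ c : K, c ≠ 0 ∧
      hesse lam ^ (p ^ e - 1) - C c * (X 0 * X 1 * X 2) ^ (p ^ e - 1)
        ∈ frobeniusPower K 2 (p ^ e) := by
  induction e with
  | zero => exact ⟨1, one_ne_zero, by simp⟩
  | succ e ih =>
    obtain ⟨c, hc, hmem⟩ := ih
    set φ := coeff (Finsupp.equivFunOnFinite.symm fun _ : Fin 3 => p - 1) (hesse lam ^ (p - 1))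
    have hp1 : 1 ≤ p := hp.out.one_le
    have hq : 1 ≤ p ^ e := Nat.one_le_pow _ _ hp1
    refine ⟨c ^ p * φ, mul_ne_zero (pow_ne_zero _ hc) h, ?_⟩
    have h1 := (pow_char_mem_iff (p := p)).2 hmem
    rw [sub_pow_char, mul_pow] at h1
    have h2 := xyz_pow_mul_mem hq (sub_mem_frobeniusPower hp1 (hesse_pow_isHomogeneous lam (p - 1)))
    have hexp : p ^ (e + 1) - 1 = (p ^ e - 1) * p + (p - 1) := by
      obtain ⟨r, hr⟩ := Nat.exists_eq_add_of_le hq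
      rw [pow_succ, hr, Nat.add_sub_cancel_left, add_mul, one_mul]
      omega
    rw [hexp, show p ^ (e + 1) = p * p ^ e by ring]
    have := Ideal.add_mem _ (Ideal.mul_mem_left _ (hesse lam ^ (p - 1)) h1)
      (Ideal.mul_mem_left _ (C c ^ p) h2)
    convert this using 1
    simp only [C_mul, C_pow, ← pow_mul, pow_add]
    ring

lemma muF_hesse_of_coeff_ne_zero (lam : K)
    (h : coeff (Finsupp.equivFunOnFinite.symm fun _ : Fin 3 => p - 1) (hesse lam ^ (p - 1)) ≠ 0)
    (e : ℕ) : muF (n := 2) (hesse lam) (p ^ e) = p ^ e := by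
  have hq : 1 ≤ p ^ e := Nat.one_le_pow _ _ hp.out.one_le
  obtain ⟨c, hc, hmem⟩ := hesse_pow_sub_mem lam h e
  refine le_antisymm (muF_le (hesse_pow_mem lam e)) ?_
  have := le_muF (hesse_pow_mem lam e) (k := p ^ e - 1) fun hf => by
    refine xyz_pow_notMem (K := K) hq (mem_of_C_mul_mem hc ?_)
    have := Ideal.sub_mem _ hf hmem
    rwa [sub_sub_cancel] at this
  omega

/-- Differentiating `f^μ ∈ m^{[q]}` shows, when `p ∤ μ`, that the Jacobian ideal, hence `m⁴`,
multiplies `f^{μ-1}` into `m^{[q]}`; as `f^{μ-1} ∉ m^{[q]}`, its degree `3(μ-1)` exceeds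
`3(q-1) - 4`. -/
lemma dvd_muF_or_le {lam : K} (h3 : (3 : K) ≠ 0) (h27 : 27 + lam ^ 3 ≠ 0) (e : ℕ) :
    p ∣ muF (n := 2) (hesse lam) (p ^ (e + 1)) ∨
      p ^ (e + 1) ≤ muF (n := 2) (hesse lam) (p ^ (e + 1)) + 1 := by
  set q := p ^ (e + 1) with hq
  set m := muF (n := 2) (hesse lam) q with hm
  by_contra! hcon
  obtain ⟨hdvd, hlt⟩ := hcon
  have hm0 : m ≠ 0 := fun h => hdvd (h ▸ dvd_zero p)
  have hmem : hesse lam ^ m ∈ frobeniusPower K 2 q := pow_muF_mem (hesse_pow_mem lam (e + 1))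
  have hnot : hesse lam ^ (m - 1) ∉ frobeniusPower K 2 q := pow_notMem_of_lt_muF (by omega)
  obtain ⟨a, b, c, habc, hout⟩ := exists_monomial_mul_notMem (by omega)
    (hesse_pow_isHomogeneous lam (m - 1)) hnot
  -- The colon ideal `(m^{[q]} : f^{μ-1})`.
  let I : Ideal (MvPolynomial (Fin 3) K) :=
    Submodule.comap (LinearMap.mulRight (MvPolynomial (Fin 3) K) (hesse lam ^ (m - 1)))
      (frobeniusPower K 2 q)
  have hI : ∀ g, g ∈ I ↔ g * hesse lam ^ (m - 1) ∈ frobeniusPower K 2 q := fun g => by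
    rw [Submodule.mem_comap, LinearMap.mulRight_apply]
  refine hout ((hI _).1 (monomial_mem_of_jacobian_mem h3 h27 (fun j => ?_) habc))
  have hd := pderiv_mem_frobeniusPower (p := p) (dvd_pow_self p e.succ_ne_zero) hmem j
  rw [Derivation.leibniz_pow, smul_eq_mul, nsmul_eq_mul, ← map_natCast C] at hd
  have hmK : (m : K) ≠ 0 := fun h => hdvd ((CharP.cast_eq_zero_iff K p m).1 h)
  have := mem_of_C_mul_mem hmK hd
  rw [hI, mul_comm]
  exact this

/-- With `μ = μ_f(q)` and `ν = μ_f(pq)`, one has `p(μ-1) < ν ≤ pμ`. Either `p ∣ ν`, so that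
`ν = pμ`, or `ν ≥ pq - 1`, which exceeds `pμ = pq - q` since `q > 1`. -/
lemma muF_hesse_of_coeff_eq_zero {lam : K} (h3 : (3 : K) ≠ 0) (h27 : 27 + lam ^ 3 ≠ 0)
    (h : coeff (Finsupp.equivFunOnFinite.symm fun _ : Fin 3 => p - 1) (hesse lam ^ (p - 1)) = 0)
    (e : ℕ) : muF (n := 2) (hesse lam) (p ^ (e + 1)) = p ^ e * (p - 1) := by
  have hp2 := hp.out.two_le
  induction e with
  | zero =>
    have hmem := sub_mem_frobeniusPower (by omega) (hesse_pow_isHomogeneous lam (p - 1))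
    rw [h, C_0, zero_mul, sub_zero] at hmem
    have hle := muF_le hmem
    have hpos : 0 + 1 ≤ muF (n := 2) (hesse lam) p := by
      refine le_muF hmem ?_
      have := xyz_pow_notMem (K := K) (q := p) (by omega)
      rw [pow_zero]
      exact fun h1 => this (by simpa using Ideal.mul_mem_left _ _ h1)
    have := dvd_muF_or_le (p := p) h3 h27 0
    rw [zero_add, pow_one] at this ⊢
    rcases this with hd | hge
    · have := Nat.le_of_dvd hpos hd
      omega
    · simp only [pow_zero, one_mul]
      omega
  | succ e ih =>
    set m := muF (n := 2) (hesse lam) (p ^ (e + 1)) with hm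
    set m' := muF (n := 2) (hesse lam) (p ^ (e + 1 + 1)) with hm'
    have hpe : 1 ≤ p ^ e := Nat.one_le_pow _ _ (by omega)
    have hm1 : 1 ≤ m := by rw [ih]; exact Nat.mul_pos hpe (by omega)
    have hsucc : p ^ (e + 1 + 1) = p * p ^ (e + 1) := by ring
    have hle : m' ≤ m * p := by
      refine muF_le ?_
      rw [pow_mul, hsucc]
      exact pow_char_mem_iff.2 (pow_muF_mem (hesse_pow_mem lam (e + 1)))
    have hge : (m - 1) * p + 1 ≤ m' := by
      refine le_muF (hesse_pow_mem lam (e + 1 + 1)) ?_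
      rw [pow_mul, hsucc, pow_char_mem_iff]
      exact pow_notMem_of_lt_muF (by omega)
    have hgoal : p ^ (e + 1) * (p - 1) = m * p := by rw [ih]; ring
    rw [hgoal]
    rcases dvd_muF_or_le (p := p) h3 h27 (e + 1) with ⟨t, ht⟩ | hbig
    · rw [← hm'] at ht
      rw [ht, mul_comm p] at hle hge ⊢
      have h1 : t ≤ m := Nat.le_of_mul_le_mul_right hle (by omega)
      have h2 : m - 1 < t := Nat.lt_of_mul_lt_mul_right (a := p) (by omega)
      rw [show t = m by omega]
    · exfalso
      rw [← hm'] at hbig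
      have h1 : p ^ (e + 1 + 1) = m * p + p ^ (e + 1) := by
        rw [← hgoal, hsucc]
        obtain ⟨r, hr⟩ := Nat.exists_eq_add_of_le hp2
        rw [show p - 1 = r + 1 by omega, mul_comm p]
        nth_rewrite 2 [hr]
        ring
      have h2 : p ≤ p ^ (e + 1) := Nat.le_self_pow (by omega) p
      omega

end Mu

/-- for `f_λ = x³ + y³ + z³ + λxyz`, the coefficient of `(xyz)^{p−1}` in
`f_λ^{p−1}` is `φ(λ) = Σ_{s=0}^{⌊(p−1)/3⌋} (−1)^s ((3s)!/(s!)³) λ^{p−1−3s}`; moreover,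
if `f_λ` has an isolated singularity, then `fpt(f_λ) = 1` when `φ(λ) ≠ 0` and
`fpt(f_λ) = 1 − 1/p` when `φ(λ) = 0`. -/
theorem statement14 {K : Type*} [Field K] {p : ℕ} [Fact p.Prime] [CharP K p]
    (lam : K) (f : MvPolynomial (Fin 3) K)
    (hf : f = X 0 ^ 3 + X 1 ^ 3 + X 2 ^ 3 + C lam * (X 0 * X 1 * X 2))
    (φ : K)
    (hφ : φ = ∑ s ∈ Finset.range ((p - 1) / 3 + 1),
      (-1 : K) ^ s * (((3 * s).factorial / s.factorial ^ 3 : ℕ) : K) * lam ^ (p - 1 - 3 * s)) :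
    coeff (Finsupp.equivFunOnFinite.symm fun _ : Fin 3 => p - 1) (f ^ (p - 1)) = φ ∧
    (HasIsolatedSingularity (n := 2) f →
      (φ ≠ 0 → HasFpt p f 1) ∧ (φ = 0 → HasFpt p f (1 - 1 / (p : ℝ)))) := by
  obtain rfl : f = hesse lam := hf
  have hcoeff : coeff (Finsupp.equivFunOnFinite.symm fun _ : Fin 3 => p - 1)
      (hesse lam ^ (p - 1)) = φ := by
    rw [hφ]
    exact coeff_hesse lam
  have hp0 : (p : ℝ) ≠ 0 := Nat.cast_ne_zero.2 (Fact.out : p.Prime).ne_zero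
  refine ⟨hcoeff, fun hiso => ⟨fun h => ?_, fun h => ?_⟩⟩
  · have hmu := muF_hesse_of_coeff_ne_zero lam (hcoeff ▸ h)
    refine tendsto_const_nhds.congr fun e => ?_
    rw [hmu e, Nat.cast_pow, div_self (pow_ne_zero e hp0)]
  · obtain ⟨h3, h27⟩ := ne_zero_of_isolated lam hiso
    have hmu := muF_hesse_of_coeff_eq_zero h3 h27 (hcoeff.trans h)
    refine (tendsto_add_atTop_iff_nat 1).1 (tendsto_const_nhds.congr fun e => ?_)
    rw [hmu e, Nat.cast_mul, Nat.cast_pow, Nat.cast_sub (Fact.out : p.Prime).one_le, Nat.cast_one,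
      pow_succ]
    field_simp
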